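/- arXiv:2209.07075 — 3 statements merged into one kernel-verified Lean document; each statement's English description precedes it below -/
import Mathlib

section
/- Let W and Θ be finite-dimensional real inner product spaces, let E : W × Θ → ℝ be twice continuously differentiable and let J : W × Θ → ℝ be continuously differentiable. Write G(w,θ) for the gradient of w' ↦ E(w',θ) at w, let H : W → W be the derivative of w ↦ G(w,θ') at w', and let C : Θ → W be the derivative of θ ↦ G(w',θ) at θ'. Suppose G(w',θ') = 0, H is invertible and self-adjoint, and let U be an open neighborhood of θ' and w* : Θ → W a map differentiable at θ' with w*(θ') = w', G(w*(θ),θ) = 0 on U, and derivative of w* at θ' equal to −H⁻¹ ∘ C. Then the gradient at θ' of the function θ ↦ J(w*(θ),θ) equals ∇₂J(w',θ') − C†(H⁻¹ ∇₁J(w',θ')), where ∇₁J and ∇₂J denote the gradients of J in the first and second variables respectively and C† : W → Θ is the adjoint of C. -/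
/-!
Pairing both sides with `v : Θ` turns gradients into derivatives. By the chain rule the derivative
of `θ ↦ J (wstar θ, θ)` in the direction `v` is `∂₁J (Dwstar v) + ∂₂J v`, and
`Dwstar v = -H⁻¹ (C v)`. Since `H` is self-adjoint, so is `H⁻¹`, which moves `H⁻¹` and then `C`
onto the gradient of `J` in the first variable.
-/

/-- Hypergradient formula: the gradient of `θ ↦ J(w*(θ), θ)` at `θ'` equals
`∇₂J(w',θ') − C† (H⁻¹ ∇₁J(w',θ'))`. -/
theorem stmt1
    {W Θ : Type*} [NormedAddCommGroup W] [InnerProductSpace ℝ W] [FiniteDimensional ℝ W]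
    [NormedAddCommGroup Θ] [InnerProductSpace ℝ Θ] [FiniteDimensional ℝ Θ]
    (E J : W × Θ → ℝ) (hE : ContDiff ℝ 2 E) (hJ : ContDiff ℝ 1 J)
    (w' : W) (θ' : Θ)
    (G : W → Θ → W)
    (hGdef : ∀ w θ, G w θ = gradient (fun x : W => E (x, θ)) w)
    (hG0 : G w' θ' = 0)
    (H : W ≃L[ℝ] W)
    (hH : (H : W →L[ℝ] W) = fderiv ℝ (fun w : W => G w θ') w')
    (hHsa : IsSelfAdjoint (H : W →L[ℝ] W))
    (C : Θ →L[ℝ] W)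
    (hC : C = fderiv ℝ (fun θ : Θ => G w' θ) θ')
    (U : Set Θ) (hU : IsOpen U) (hθ'U : θ' ∈ U)
    (wstar : Θ → W) (hdiff : DifferentiableAt ℝ wstar θ')
    (hw0 : wstar θ' = w')
    (hroot : ∀ θ ∈ U, G (wstar θ) θ = 0)
    (hderiv : fderiv ℝ wstar θ' = -((H.symm : W →L[ℝ] W).comp C)) :
    gradient (fun θ : Θ => J (wstar θ, θ)) θ' =
      gradient (fun θ : Θ => J (w', θ)) θ' -
        (ContinuousLinearMap.adjoint C) (H.symm (gradient (fun w : W => J (w, θ')) w')) := by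
  subst hw0
  have hJd : HasFDerivAt J (fderiv ℝ J (wstar θ', θ')) (wstar θ', θ') :=
    (hJ.differentiable one_ne_zero _).hasFDerivAt
  have h_total : HasFDerivAt (fun θ : Θ => J (wstar θ, θ)) _ θ' :=
    HasFDerivAt.comp (f := fun θ : Θ => (wstar θ, θ)) θ' hJd
      (hdiff.hasFDerivAt.prodMk (hasFDerivAt_id θ'))
  have h_snd : HasFDerivAt (fun θ : Θ => J (wstar θ', θ)) _ θ' :=
    HasFDerivAt.comp (f := fun θ : Θ => (wstar θ', θ)) θ' hJd
      ((hasFDerivAt_const (wstar θ') θ').prodMk (hasFDerivAt_id θ'))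
  have h_fst : HasFDerivAt (fun w : W => J (w, θ')) _ (wstar θ') :=
    HasFDerivAt.comp (f := fun w : W => (w, θ')) (wstar θ') hJd
      ((hasFDerivAt_id (wstar θ')).prodMk (hasFDerivAt_const θ' (wstar θ')))
  have hH_symm : ∀ x y : W, inner ℝ (H x) y = inner ℝ x (H y) := hHsa.isSymmetric
  have hHinv_symm : ∀ x y : W, inner ℝ (H.symm x) y = inner ℝ x (H.symm y) := fun x y => by
    simpa using (hH_symm (H.symm x) (H.symm y)).symm
  refine ext_inner_right ℝ fun v => ?_
  rw [inner_sub_left, ContinuousLinearMap.adjoint_inner_left, hHinv_symm]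
  simp only [gradient, InnerProductSpace.toDual_symm_apply]
  rw [h_total.fderiv, h_snd.fderiv, h_fst.fderiv, hderiv]
  simp only [ContinuousLinearMap.comp_apply, ContinuousLinearMap.prod_apply,
    ContinuousLinearMap.neg_apply, ContinuousLinearMap.zero_apply, ContinuousLinearMap.id_apply,
    ContinuousLinearEquiv.coe_coe]
  rw [← map_sub]
  simp
end

section
/- Let W and Θ be finite-dimensional real inner product spaces, let θ ∈ Θ be fixed, and let E, J : W × Θ → ℝ be twice continuously differentiable. For w' ∈ W write G(w') for the gradient of w'' ↦ E(w'',θ) at w', H(w') : W → W for the derivative of G at w', C(w') : Θ → W for the derivative of θ' ↦ (gradient of w'' ↦ E(w'',θ') at w') at θ, and ∇₁J(w'), ∇₂J(w') for the gradients of J(·,θ) and J(w',·) at (w',θ). Let μ, ρ, τ, L, M > 0 and assume: for every w' ∈ W, H(w') is invertible and self-adjoint with ‖H(w')⁻¹‖ ≤ 1/μ; the map w' ↦ H(w') is ρ-Lipschitz in operator norm; the map w' ↦ C(w') is τ-Lipschitz in operator norm; ‖C(w')‖ ≤ L for all w'; the maps w' ↦ ∇₁J(w') and w' ↦ ∇₂J(w')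 are L-Lipschitz; and ‖∇₁J(w')‖ ≤ M whenever ‖w'‖ ≤ 2‖w‖. Let w ∈ W satisfy G(w) = 0, and let w_t ∈ W satisfy ‖w_t − w‖ ≤ p_t ‖w‖ for some 0 ≤ p_t < 1. Set κ = L/μ, z_t = H(w_t)⁻¹ ∇₁J(w_t), z = H(w)⁻¹ ∇₁J(w), and let m ≥ 1 with mκ ≥ 1 and z_m ∈ W satisfy ‖z_m − z_t‖ ≤ (1 − 1/(mκ))^{m²/2} ‖z_t‖. Define d_t = ∇₂J(w_t) − C(w_t)† z_m and d = ∇₂J(w) − C(w)† z. Then ‖d_t − d‖ ≤ (L(1 + κ + ρM/μ²) + τM/μ) p_t ‖w‖ + Mκ (1 − 1/(mκ))^{m²/2}. -/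
/-!
Write `r` for the contraction factor of the linear solver and `Δ = ‖w_t - w‖`. The estimate is the
triangle inequality applied to
`d_t - d = (∇₂J(w_t) - ∇₂J(w)) - C(w_t)† (z_m - z_t) - C(w_t)† (z_t - z) - (C(w_t) - C(w))† z`.
The only term that is not immediate is `z_t - z`, for which the resolvent-type identity
`z_t - z = H(w_t)⁻¹ ((∇₁J(w_t) - ∇₁J(w)) - (H(w_t) - H(w)) z)` gives
`‖z_t - z‖ ≤ (L Δ + ρ Δ M / μ) / μ`. Since `p_t < 1`, both `w_t` and `w` lie in the ball of radius
`2‖w‖`, so `‖z_t‖` and `‖z‖` are at most `M / μ`.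
-/

/-- Error bound for the approximate hypergradient computed with an inexact inner
solution `w_t` and an approximate linear-system solution `z_m` (Theorem 2). -/
theorem stmt2
    {W Θ : Type*} [NormedAddCommGroup W] [InnerProductSpace ℝ W] [FiniteDimensional ℝ W]
    [NormedAddCommGroup Θ] [InnerProductSpace ℝ Θ] [FiniteDimensional ℝ Θ]
    (θ : Θ) (E J : W × Θ → ℝ) (hE : ContDiff ℝ 2 E) (hJ : ContDiff ℝ 2 J)
    (G : W → W) (hGdef : ∀ w' : W, G w' = gradient (fun x : W => E (x, θ)) w')
    (H : W → (W ≃L[ℝ] W))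
    (hHdef : ∀ w' : W, ((H w' : W →L[ℝ] W)) = fderiv ℝ G w')
    (C : W → (Θ →L[ℝ] W))
    (hCdef : ∀ w' : W,
      C w' = fderiv ℝ (fun θ' : Θ => gradient (fun x : W => E (x, θ')) w') θ)
    (J₁ : W → W) (hJ₁def : ∀ w' : W, J₁ w' = gradient (fun x : W => J (x, θ)) w')
    (J₂ : W → Θ) (hJ₂def : ∀ w' : W, J₂ w' = gradient (fun θ' : Θ => J (w', θ')) θ)
    (μ ρ τ L M : ℝ) (hμ : 0 < μ) (hρ : 0 < ρ) (hτ : 0 < τ) (hL : 0 < L) (hM : 0 < M)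
    (hHinv : ∀ w' : W, ‖(((H w').symm : W →L[ℝ] W))‖ ≤ 1 / μ)
    (hHsa : ∀ w' : W, IsSelfAdjoint ((H w' : W →L[ℝ] W)))
    (hHlip : ∀ a b : W, ‖(H a : W →L[ℝ] W) - (H b : W →L[ℝ] W)‖ ≤ ρ * ‖a - b‖)
    (hClip : ∀ a b : W, ‖C a - C b‖ ≤ τ * ‖a - b‖)
    (hCbd : ∀ w' : W, ‖C w'‖ ≤ L)
    (hJ₁lip : ∀ a b : W, ‖J₁ a - J₁ b‖ ≤ L * ‖a - b‖)
    (hJ₂lip : ∀ a b : W, ‖J₂ a - J₂ b‖ ≤ L * ‖a - b‖)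
    (w : W) (hJ₁bd : ∀ w' : W, ‖w'‖ ≤ 2 * ‖w‖ → ‖J₁ w'‖ ≤ M)
    (hGw : G w = 0)
    (w_t : W) (p_t : ℝ) (hp0 : 0 ≤ p_t) (hp1 : p_t < 1)
    (hwt : ‖w_t - w‖ ≤ p_t * ‖w‖)
    (κ : ℝ) (hκ : κ = L / μ)
    (z_t z : W) (hzt : z_t = (H w_t).symm (J₁ w_t)) (hz : z = (H w).symm (J₁ w))
    (m : ℕ) (hm : 1 ≤ m) (hmκ : 1 ≤ (m : ℝ) * κ)
    (z_m : W)
    (hzm : ‖z_m - z_t‖ ≤ (1 - 1 / ((m : ℝ) * κ)) ^ (((m : ℝ) ^ 2) / 2) * ‖z_t‖)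
    (d_t d : Θ)
    (hdt : d_t = J₂ w_t - (ContinuousLinearMap.adjoint (C w_t)) z_m)
    (hd : d = J₂ w - (ContinuousLinearMap.adjoint (C w)) z) :
    ‖d_t - d‖ ≤ (L * (1 + κ + ρ * M / μ ^ 2) + τ * M / μ) * p_t * ‖w‖ +
      M * κ * (1 - 1 / ((m : ℝ) * κ)) ^ (((m : ℝ) ^ 2) / 2) := by
  have hΔ : 0 ≤ ‖w_t - w‖ := norm_nonneg _
  have hinv : ∀ a x : W, ‖(H a).symm x‖ ≤ ‖x‖ / μ := fun a x => by
    have h := ((H a).symm : W →L[ℝ] W).le_of_opNorm_le (hHinv a) x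
    rwa [one_div_mul_eq_div] at h
  have hw_t : ‖w_t‖ ≤ 2 * ‖w‖ := by
    have h1 : ‖w_t‖ ≤ ‖w_t - w‖ + ‖w‖ := by simpa using norm_add_le (w_t - w) w
    nlinarith [norm_nonneg w]
  have hz_t_le : ‖z_t‖ ≤ M / μ := by
    rw [hzt]
    exact (hinv _ _).trans (by gcongr; exact hJ₁bd _ hw_t)
  have hz_le : ‖z‖ ≤ M / μ := by
    rw [hz]
    exact (hinv _ _).trans (by gcongr; exact hJ₁bd _ (by linarith [norm_nonneg w]))
  have hz_diff_eq : z_t - z = (H w_t).symm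
      ((J₁ w_t - J₁ w) - ((H w_t : W →L[ℝ] W) - (H w : W →L[ℝ] W)) z) := by
    apply (H w_t).injective
    have hHz : H w z = J₁ w := by rw [hz]; simp
    have hHzt : H w_t z_t = J₁ w_t := by rw [hzt]; simp
    simp only [map_sub, ContinuousLinearEquiv.apply_symm_apply, ContinuousLinearMap.sub_apply,
      ContinuousLinearEquiv.coe_coe, hHz, hHzt]
    abel
  have hz_diff : ‖z_t - z‖ ≤ (L * ‖w_t - w‖ + ρ * ‖w_t - w‖ * (M / μ)) / μ := by
    rw [hz_diff_eq]
    refine (hinv _ _).trans ?_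
    gcongr
    refine (norm_sub_le _ _).trans (add_le_add (hJ₁lip _ _) ?_)
    exact (ContinuousLinearMap.le_of_opNorm_le _ (hHlip w_t w) z).trans (by gcongr)
  have hCadj : ‖ContinuousLinearMap.adjoint (C w_t)‖ ≤ L := by
    rw [LinearIsometryEquiv.norm_map]
    exact hCbd w_t
  have hCadj_diff : ‖ContinuousLinearMap.adjoint (C w_t - C w)‖ ≤ τ * ‖w_t - w‖ := by
    rw [LinearIsometryEquiv.norm_map]
    exact hClip w_t w
  -- `mκ ≥ 1` makes the base of the real power nonnegative.
  have hr : 0 ≤ (1 - 1 / ((m : ℝ) * κ)) ^ (((m : ℝ) ^ 2) / 2) := by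
    apply Real.rpow_nonneg
    rw [sub_nonneg, div_le_one (by linarith)]
    exact hmκ
  generalize (1 - 1 / ((m : ℝ) * κ)) ^ (((m : ℝ) ^ 2) / 2) = r at hzm hr ⊢
  have hdecomp : d_t - d = (J₂ w_t - J₂ w) - ContinuousLinearMap.adjoint (C w_t) (z_m - z_t)
      - ContinuousLinearMap.adjoint (C w_t) (z_t - z)
      - ContinuousLinearMap.adjoint (C w_t - C w) z := by
    rw [hdt, hd]
    simp only [map_sub, ContinuousLinearMap.sub_apply]
    abel
  have hsolver : ‖ContinuousLinearMap.adjoint (C w_t) (z_m - z_t)‖ ≤ L * (r * (M / μ)) :=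
    (ContinuousLinearMap.le_of_opNorm_le _ hCadj _).trans
      (by gcongr; exact hzm.trans (by gcongr))
  have hsolution : ‖ContinuousLinearMap.adjoint (C w_t) (z_t - z)‖
      ≤ L * ((L * ‖w_t - w‖ + ρ * ‖w_t - w‖ * (M / μ)) / μ) :=
    (ContinuousLinearMap.le_of_opNorm_le _ hCadj _).trans (by gcongr)
  have hmixed : ‖ContinuousLinearMap.adjoint (C w_t - C w) z‖ ≤ τ * ‖w_t - w‖ * (M / μ) :=
    (ContinuousLinearMap.le_of_opNorm_le _ hCadj_diff _).trans (by gcongr)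
  calc ‖d_t - d‖
      ≤ L * ‖w_t - w‖ + L * (r * (M / μ))
          + L * ((L * ‖w_t - w‖ + ρ * ‖w_t - w‖ * (M / μ)) / μ)
          + τ * ‖w_t - w‖ * (M / μ) := by
        rw [hdecomp]
        exact norm_sub_le_of_le (norm_sub_le_of_le (norm_sub_le_of_le (hJ₂lip _ _) hsolver)
          hsolution) hmixed
    _ = (L * (1 + κ + ρ * M / μ ^ 2) + τ * M / μ) * ‖w_t - w‖ + M * κ * r := by
        rw [hκ]
        field_simp
        ring
    _ ≤ (L * (1 + κ + ρ * M / μ ^ 2) + τ * M / μ) * (p_t * ‖w‖) + M * κ * r := by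
        have hκ0 : 0 < κ := hκ ▸ div_pos hL hμ
        gcongr
    _ = (L * (1 + κ + ρ * M / μ ^ 2) + τ * M / μ) * p_t * ‖w‖ + M * κ * r := by ring
end

section
/- Let W and Θ be real inner product spaces (or real normed spaces). Let μ, ρ, τ, L, M, δ, ε ≥ 0 with μ > 0, and set κ = L/μ. Let a_t, a ∈ Θ and b_t, b ∈ W with ‖b_t‖ ≤ M and ‖a_t − a‖ ≤ Lδ, ‖b_t − b‖ ≤ Lδ. Let H_t, H : W → W be invertible continuous linear maps with ‖H_t⁻¹‖ ≤ 1/μ, ‖H⁻¹‖ ≤ 1/μ and ‖H_t − H‖ ≤ ρδ. Let C_t, C : W → Θ be continuous linear maps with ‖C_t‖ ≤ L, ‖C‖ ≤ L and ‖C_t − C‖ ≤ τδ. Set z_t = H_t⁻¹ b_t and z = H⁻¹ b, and let z_m ∈ W satisfy ‖z_m − z_t‖ ≤ ε ‖z_t‖. Then ‖(a_t − C_t z_m) − (a − C z)‖ ≤ (L(1 + κ + ρM/μ²) + τM/μ) δ + M κ ε. -/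
/-!
The error splits as
`(a_t - a) - C_t (z_m - z_t) - (C_t - C) z_t - C (z_t - z)`,
where `‖z_t‖ ≤ M / μ`. The last term is controlled by the resolvent-type identity
`z_t - z = H⁻¹ ((b_t - b) - (H_t - H) z_t)`, which gives
`‖z_t - z‖ ≤ (L δ + ρ δ M / μ) / μ`. Summing the four bounds yields the claim.
-/

/-- Core operator-norm estimate for the hypergradient approximation error. -/
theorem stmt3
    {W Θ : Type*} [NormedAddCommGroup W] [NormedSpace ℝ W]
    [NormedAddCommGroup Θ] [NormedSpace ℝ Θ]
    (μ ρ τ L M δ ε : ℝ) (hμ : 0 < μ) (hρ : 0 ≤ ρ) (hτ : 0 ≤ τ) (hL : 0 ≤ L)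
    (hM : 0 ≤ M) (hδ : 0 ≤ δ) (hε : 0 ≤ ε)
    (κ : ℝ) (hκ : κ = L / μ)
    (a_t a : Θ) (b_t b : W)
    (hbt : ‖b_t‖ ≤ M) (ha : ‖a_t - a‖ ≤ L * δ) (hb : ‖b_t - b‖ ≤ L * δ)
    (H_t H : W ≃L[ℝ] W)
    (hHt : ‖(H_t.symm : W →L[ℝ] W)‖ ≤ 1 / μ) (hH : ‖(H.symm : W →L[ℝ] W)‖ ≤ 1 / μ)
    (hHd : ‖(H_t : W →L[ℝ] W) - (H : W →L[ℝ] W)‖ ≤ ρ * δ)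
    (C_t C : W →L[ℝ] Θ)
    (hCt : ‖C_t‖ ≤ L) (hC : ‖C‖ ≤ L) (hCd : ‖C_t - C‖ ≤ τ * δ)
    (z_t z z_m : W) (hzt : z_t = H_t.symm b_t) (hz : z = H.symm b)
    (hzm : ‖z_m - z_t‖ ≤ ε * ‖z_t‖) :
    ‖(a_t - C_t z_m) - (a - C z)‖ ≤
      (L * (1 + κ + ρ * M / μ ^ 2) + τ * M / μ) * δ + M * κ * ε := by
  have hzt_norm : ‖z_t‖ ≤ 1 / μ * M := by
    rw [hzt]
    exact (H_t.symm : W →L[ℝ] W).le_of_opNorm_le_of_le hHt hbt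
  have hid : z_t - z =
      (H.symm : W →L[ℝ] W) ((b_t - b) - ((H_t : W →L[ℝ] W) - (H : W →L[ℝ] W)) z_t) := by
    subst hzt hz
    simp
  have hdiff : ‖z_t - z‖ ≤ 1 / μ * (L * δ + ρ * δ * (1 / μ * M)) := by
    rw [hid]
    refine (H.symm : W →L[ℝ] W).le_of_opNorm_le_of_le hH ((norm_sub_le _ _).trans ?_)
    exact add_le_add hb (ContinuousLinearMap.le_of_opNorm_le_of_le _ hHd hzt_norm)
  have h₁ : ‖C_t (z_m - z_t)‖ ≤ L * (ε * (1 / μ * M)) :=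
    C_t.le_of_opNorm_le_of_le hCt (hzm.trans (mul_le_mul_of_nonneg_left hzt_norm hε))
  have h₂ : ‖(C_t - C) z_t‖ ≤ τ * δ * (1 / μ * M) :=
    (C_t - C).le_of_opNorm_le_of_le hCd hzt_norm
  have h₃ : ‖C (z_t - z)‖ ≤ L * (1 / μ * (L * δ + ρ * δ * (1 / μ * M))) :=
    C.le_of_opNorm_le_of_le hC hdiff
  have hsplit : (a_t - C_t z_m) - (a - C z) =
      (a_t - a) - C_t (z_m - z_t) - (C_t - C) z_t - C (z_t - z) := by
    simp only [map_sub, ContinuousLinearMap.sub_apply]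
    abel
  calc ‖(a_t - C_t z_m) - (a - C z)‖
      ≤ ‖a_t - a‖ + ‖C_t (z_m - z_t)‖ + ‖(C_t - C) z_t‖ + ‖C (z_t - z)‖ := by
        rw [hsplit]
        exact norm_sub_le_of_le (norm_sub_le_of_le (norm_sub_le _ _) le_rfl) le_rfl
    _ ≤ L * δ + L * (ε * (1 / μ * M)) + τ * δ * (1 / μ * M)
          + L * (1 / μ * (L * δ + ρ * δ * (1 / μ * M))) := by
        gcongr
    _ = (L * (1 + κ + ρ * M / μ ^ 2) + τ * M / μ) * δ + M * κ * ε := by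
        rw [hκ]
        field_simp
        ring
end
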